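/- If a polyquantoid (N,e) has an ideal element, then there exist a tight selfdual matroid rank function r on N and t > 0 such that e = t·ř, where ř(I) = r(I) − (1/2)Σ_{i∈I} r({i}). -/

import Mathlib

/-!
Rescaling a polyquantoid whose singletons all have the value `c > 0` to
`r I = e I / (2 * c) + #I / 2` gives a selfdual polymatroid with `r {i} = 1`, so only the
integrality of `r` is at stake. It follows by removing the elements of a set `C` one at a time, once
every nonempty `C` has some `j` whose removal lowers `r` by `0` or `1`.

If `n ∈ C`, take `j = n`. Otherwise, as the elements of `C` are essential, there is a minimal `D`
such that `D ∪ C` spans `n` and `D` does not. By minimality every `d ∈ D` is a coloop of `D ∪ C`,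
which forces the removal of any `j ∈ C` to have the same effect on the ranks of `C` and `D ∪ C`. By
exchange, some `j ∈ C` lies in the span of `D ∪ C.erase j` together with `n`. For this `j` the
effect is that of adding `n` to `D ∪ C.erase j`, which is `0` or `1` because `n` is perfect.
-/

open Finset

/-- A polymatroid rank function: normalized, monotone and submodular. -/
structure IsPolymatroid {N K : Type*} [DecidableEq N] [CommRing K] [LinearOrder K]
    (r : Finset N → K) : Prop where
  map_empty : r ∅ = 0
  mono : Monotone r
  submodular : ∀ I J : Finset N, r (I ∪ J) + r (I ∩ J) ≤ r I + r J

/-- A matroid rank function: an integer polymatroid in which singletons have rank `0` or `1`. The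
values are kept in `K` and integrality is a condition, so that they compare with those of a
polyquantoid. -/
structure IsMatroidRank {N K : Type*} [DecidableEq N] [CommRing K] [LinearOrder K]
    (r : Finset N → K) : Prop extends IsPolymatroid r where
  exists_natCast_eq : ∀ I : Finset N, ∃ m : ℕ, r I = m
  singleton_eq : ∀ i : N, r {i} = 0 ∨ r {i} = 1

/-- Tightness of a rank function: no element is a coloop. -/
def IsTight {N K : Type*} [Fintype N] [DecidableEq N] (r : Finset N → K) : Prop :=
  ∀ i : N, r {i}ᶜ = r univ

/-- Selfduality of a rank function: it agrees with the rank function of its dual. -/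
def IsSelfdual {N K : Type*} [Fintype N] [DecidableEq N] [CommRing K] (r : Finset N → K) : Prop :=
  ∀ I : Finset N, r I = r Iᶜ - r univ + ∑ i ∈ I, r {i}

/-- The element `i` lies in the span (closure) of `X` with respect to the rank function `r`. -/
def Spans {N K : Type*} [DecidableEq N] (r : Finset N → K) (X : Finset N) (i : N) : Prop :=
  r (insert i X) = r X

/-- A polyquantoid: a normalized, complementary and submodular set function. -/
structure IsPolyquantoid {N K : Type*} [Fintype N] [DecidableEq N] [CommRing K] [LinearOrder K]
    (e : Finset N → K) : Prop where
  map_empty : e ∅ = 0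
  map_compl : ∀ I : Finset N, e I = e Iᶜ
  submodular : ∀ I J : Finset N, e (I ∪ J) + e (I ∩ J) ≤ e I + e J

/-- An ideal element `n` of a polyquantoid: `n` is perfect, and every other element is essential for
`n` and has the same value as `n`. -/
structure IsIdealElement {N K : Type*} [Fintype N] [DecidableEq N] [CommRing K]
    (e : Finset N → K) (n : N) : Prop where
  perfect : ∀ I ⊆ ({n}ᶜ : Finset N),
    e (insert n I) - e I = e {n} ∨ e (insert n I) - e I = -e {n}
  essential : ∀ i ∈ ({n}ᶜ : Finset N), ∃ I ⊆ ({n}ᶜ : Finset N), i ∈ I ∧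
    e (insert n I) - e I = -e {n} ∧ e (insert n (I \ {i})) - e (I \ {i}) = e {n}
  singleton_eq_of_ne : ∀ i ∈ ({n}ᶜ : Finset N), e {i} = e {n}

theorem isMatroidRank_zero {N K : Type*} [DecidableEq N] [CommRing K] [LinearOrder K] :
    IsMatroidRank (0 : Finset N → K) where
  map_empty := rfl
  mono := monotone_const
  submodular _ _ := le_rfl
  exists_natCast_eq _ := ⟨0, Nat.cast_zero.symm⟩
  singleton_eq _ := Or.inl rfl

theorem IsSelfdual.isTight {N K : Type*} [Fintype N] [DecidableEq N] [CommRing K]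
    {r : Finset N → K} (hr : IsSelfdual r) : IsTight r := by
  intro i
  have h := hr {i}
  rw [sum_singleton] at h
  linear_combination -h

section Polymatroid

variable {N K : Type*} [DecidableEq N] [CommRing K] [LinearOrder K] [IsStrictOrderedRing K]
  {r : Finset N → K} {X Y C D : Finset N} {i j n : N}

namespace IsPolymatroid

theorem insert_add_le_insert_add (hr : IsPolymatroid r) (hXY : X ⊆ Y) (i : N) :
    r (insert i Y) + r X ≤ r (insert i X) + r Y := by
  calc r (insert i Y) + r X ≤ r (insert i X ∪ Y) + r (insert i X ∩ Y) := by
        gcongr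
        · exact hr.mono (by grind)
        · exact hr.mono (by grind)
    _ ≤ r (insert i X) + r Y := hr.submodular _ _

theorem insert_le_add_one (hr : IsPolymatroid r) (hi : r {i} ≤ 1) (X : Finset N) :
    r (insert i X) ≤ r X + 1 := by
  have h := hr.insert_add_le_insert_add (empty_subset X) i
  rw [hr.map_empty, insert_empty_eq] at h
  linarith

theorem union_le_card_add (hr : IsPolymatroid r) (hone : ∀ i, r {i} ≤ 1) (D X : Finset N) :
    r (D ∪ X) ≤ #D + r X := by
  induction D using Finset.induction_on with
  | empty => simp
  | insert d D hd ih =>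
    rw [insert_union, card_insert_of_notMem hd, Nat.cast_succ]
    linarith [hr.insert_le_add_one (hone d) (D ∪ X)]

theorem card_add_le_union (hr : IsPolymatroid r)
    (hD : ∀ d ∈ D, r (D.erase d ∪ C) + 1 ≤ r (D ∪ C)) : #D + r C ≤ r (D ∪ C) := by
  suffices h : ∀ E ⊆ D, #E + r C ≤ r (E ∪ C) from h D Subset.rfl
  intro E hED
  induction E using Finset.induction_on with
  | empty => simp
  | insert d E hdE ih =>
    obtain ⟨hdD, hED⟩ := insert_subset_iff.1 hED
    have hd := hr.insert_add_le_insert_add (show E ∪ C ⊆ D.erase d ∪ C by grind) d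
    rw [← insert_union, ← insert_union, insert_erase hdD] at hd
    rw [card_insert_of_notMem hdE, Nat.cast_succ]
    linarith [hD d hdD, ih hED]

end IsPolymatroid

theorem Spans.mono (hr : IsPolymatroid r) (hXY : X ⊆ Y) (hX : Spans r X i) : Spans r Y i := by
  have h := hr.insert_add_le_insert_add hXY i
  rw [hX] at h
  exact le_antisymm (by linarith) (hr.mono (subset_insert i Y))

theorem Spans.exchange (hr : IsPolymatroid r) (hj : r {j} ≤ 1)
    (hn : r (insert n X) = r X + 1) (hspan : Spans r (insert j X) n) :
    Spans r (insert n X) j := by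
  refine le_antisymm ?_ (hr.mono (subset_insert j _))
  calc r (insert j (insert n X)) = r (insert j X) := by rw [insert_comm, hspan]
    _ ≤ r X + 1 := hr.insert_le_add_one hj X
    _ = r (insert n X) := hn.symm

theorem exists_spans_insert_of_spans_union (hr : IsPolymatroid r) (hone : ∀ i, r {i} ≤ 1)
    (hn : ∀ X, Spans r X n ∨ r (insert n X) = r X + 1)
    (hC : Spans r (D ∪ C) n) (hD : ¬ Spans r D n) :
    ∃ j ∈ C, Spans r (insert n (D ∪ C.erase j)) j := by
  obtain ⟨S, hSC, hS⟩ := exists_minimal_le_of_wellFoundedLT (fun S ↦ Spans r (D ∪ S) n) C hC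
  obtain ⟨j, hjS⟩ : S.Nonempty := by
    rw [nonempty_iff_ne_empty]
    rintro rfl
    exact hD (by simpa only [union_empty] using hS.prop)
  have hSj : ¬ Spans r (D ∪ S.erase j) n := hS.not_prop_of_lt (erase_ssubset hjS)
  have hj : Spans r (insert n (D ∪ S.erase j)) j := by
    refine Spans.exchange hr (hone j) ((hn _).resolve_left hSj) ?_
    rw [← union_insert, insert_erase hjS]
    exact hS.prop
  exact ⟨j, hSC hjS, hj.mono hr (by gcongr)⟩

/-- Every element of `D` is a coloop of `D ∪ C`: without it, `n` would not be spanned. -/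
theorem IsPolymatroid.union_eq_card_add (hr : IsPolymatroid r) (hone : ∀ i, r {i} ≤ 1)
    (hn : ∀ X, Spans r X n ∨ r (insert n X) = r X + 1)
    (hC : Spans r (D ∪ C) n) (hD : ∀ d ∈ D, ¬ Spans r (D.erase d ∪ C) n) :
    r (D ∪ C) = #D + r C := by
  refine le_antisymm (hr.union_le_card_add hone D C) (hr.card_add_le_union fun d hd ↦ ?_)
  calc r (D.erase d ∪ C) + 1 = r (insert n (D.erase d ∪ C)) := ((hn _).resolve_left (hD d hd)).symm
    _ ≤ r (insert n (D ∪ C)) := hr.mono (by gcongr; exact erase_subset d D)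
    _ = r (D ∪ C) := hC

theorem exists_minimal_spans_union (hr : IsPolymatroid r)
    (hC : Spans r (X ∪ C) n) (hX : ¬ Spans r X n) :
    ∃ D, Spans r (D ∪ C) n ∧ ¬ Spans r D n ∧ ∀ d ∈ D, ¬ Spans r (D.erase d ∪ C) n := by
  obtain ⟨D, hD⟩ := exists_minimal_of_wellFoundedLT
    (fun D ↦ Spans r (D ∪ C) n ∧ ¬ Spans r D n) ⟨X, hC, hX⟩
  refine ⟨D, hD.prop.1, hD.prop.2, fun d hd hspan ↦ ?_⟩
  exact hD.not_prop_of_lt (erase_ssubset hd)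
    ⟨hspan, fun h ↦ hD.prop.2 (h.mono hr (erase_subset d D))⟩

namespace IsPolymatroid

theorem exists_erase_eq_or_eq_add_one (hr : IsPolymatroid r) (hone : ∀ i, r {i} ≤ 1)
    (hn : ∀ X, Spans r X n ∨ r (insert n X) = r X + 1)
    (hess : ∀ i ≠ n, ∃ A, Spans r A n ∧ ¬ Spans r (A.erase i) n) (hC : C.Nonempty) :
    ∃ j ∈ C, r C = r (C.erase j) ∨ r C = r (C.erase j) + 1 := by
  by_cases hnC : n ∈ C
  · exact ⟨n, hnC, by simpa only [Spans, insert_erase hnC] using hn (C.erase n)⟩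
  obtain ⟨i, hiC⟩ := hC
  obtain ⟨A, hA, hAi⟩ := hess i (ne_of_mem_of_not_mem hiC hnC)
  obtain ⟨D, hDC, hD, hDerase⟩ : ∃ D, Spans r (D ∪ C) n ∧ ¬ Spans r D n ∧
      ∀ d ∈ D, ¬ Spans r (D.erase d ∪ C) n :=
    exists_minimal_spans_union (X := A \ C) hr (hA.mono hr (by grind))
      fun h ↦ hAi (h.mono hr (by grind))
  obtain ⟨j, hjC, hj⟩ := exists_spans_insert_of_spans_union hr hone hn hDC hD
  have hinsert : insert j (D ∪ C.erase j) = D ∪ C := by rw [← union_insert, insert_erase hjC]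
  have hsame : r (D ∪ C) - r (D ∪ C.erase j) = r C - r (C.erase j) := by
    have hle := hr.insert_add_le_insert_add (subset_union_right : C.erase j ⊆ D ∪ C.erase j) j
    rw [hinsert, insert_erase hjC] at hle
    have hcard := hr.union_le_card_add hone D (C.erase j)
    linarith [hr.union_eq_card_add hone hn hDC hDerase]
  have hrank : r (insert n (D ∪ C.erase j)) = r (D ∪ C) := by
    rw [← hj, insert_comm, hinsert, hDC]
  refine ⟨j, hjC, (hn (D ∪ C.erase j)).imp (fun h ↦ ?_) fun h ↦ ?_⟩
  · rw [Spans, hrank] at h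
    linear_combination h - hsame
  · rw [hrank] at h
    linear_combination h - hsame

theorem exists_natCast_eq (hr : IsPolymatroid r) (hone : ∀ i, r {i} ≤ 1)
    (hn : ∀ X, Spans r X n ∨ r (insert n X) = r X + 1)
    (hess : ∀ i ≠ n, ∃ A, Spans r A n ∧ ¬ Spans r (A.erase i) n) (C : Finset N) :
    ∃ m : ℕ, r C = m := by
  induction C using Finset.strongInduction with
  | H C ih =>
    rcases C.eq_empty_or_nonempty with rfl | hC
    · exact ⟨0, by rw [hr.map_empty, Nat.cast_zero]⟩
    obtain ⟨j, hjC, hj⟩ := hr.exists_erase_eq_or_eq_add_one hone hn hess hC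
    obtain ⟨m, hm⟩ := ih _ (erase_ssubset hjC)
    rcases hj with hj | hj
    · exact ⟨m, hj.trans hm⟩
    · exact ⟨m + 1, by rw [hj, hm, Nat.cast_succ]⟩

end IsPolymatroid

end Polymatroid

namespace IsPolyquantoid

variable {N K : Type*} [Fintype N] [DecidableEq N] [CommRing K] [LinearOrder K]
  {e : Finset N → K}

theorem map_univ (he : IsPolyquantoid e) : e univ = 0 := by
  rw [he.map_compl, compl_univ, he.map_empty]

variable [IsStrictOrderedRing K]

theorem nonneg (he : IsPolyquantoid e) (I : Finset N) : 0 ≤ e I := by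
  have h := he.submodular I Iᶜ
  rw [union_compl, inter_compl, he.map_empty, he.map_univ, ← he.map_compl] at h
  linarith

theorem insert_le (he : IsPolyquantoid e) (i : N) (X : Finset N) :
    e (insert i X) ≤ e {i} + e X := by
  rw [insert_eq]
  linarith [he.submodular {i} X, he.nonneg ({i} ∩ X)]

theorem le_insert (he : IsPolyquantoid e) {i : N} {X : Finset N} (hi : i ∉ X) :
    e X ≤ e {i} + e (insert i X) := by
  have h := he.insert_le i (insert i X)ᶜ
  rwa [compl_insert, insert_erase (mem_compl.2 hi), ← he.map_compl X, ← compl_insert,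
    ← he.map_compl] at h

theorem eq_zero_of_singleton_eq_zero (he : IsPolyquantoid e) (h : ∀ i, e {i} = 0) : e = 0 := by
  ext I
  induction I using Finset.induction_on with
  | empty => exact he.map_empty
  | insert i I _ ih =>
    refine le_antisymm ?_ (he.nonneg _)
    simpa only [h, ih, Pi.zero_apply, add_zero] using he.insert_le i I

end IsPolyquantoid

/-- The rank function attached to a polyquantoid `e` whose singletons all have the value `c`: the
solution `r` of `e = 2 * c * ř` with `r {i} = 1` for all `i`. For `c = 0` it is the junk value
`#I / 2`. -/
def uniformRank {N K : Type*} [Field K] (e : Finset N → K) (c : K) (I : Finset N) : K :=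
  e I / (2 * c) + #I / 2

section UniformRank

variable {N K : Type*} [Field K] [CharZero K] {e : Finset N → K} {c : K} {X : Finset N} {i : N}

theorem uniformRank_singleton (hi : e {i} = c) (hc : c ≠ 0) : uniformRank e c {i} = 1 := by
  rw [uniformRank, hi, card_singleton]
  field_simp
  norm_num

theorem sum_uniformRank_singleton (hsingle : ∀ i, e {i} = c) (hc : c ≠ 0) (I : Finset N) :
    ∑ i ∈ I, uniformRank e c {i} = #I := by
  simp only [uniformRank_singleton (hsingle _) hc, sum_const, nsmul_one]

theorem eq_mul_uniformRank_sub_sum (hsingle : ∀ i, e {i} = c) (hc : c ≠ 0) (I : Finset N) :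
    e I = 2 * c * (uniformRank e c I - (1 / 2) * ∑ i ∈ I, uniformRank e c {i}) := by
  rw [sum_uniformRank_singleton hsingle hc, uniformRank]
  field_simp
  ring

variable [DecidableEq N]

theorem uniformRank_insert (hc : c ≠ 0) (hi : i ∉ X) :
    uniformRank e c (insert i X) = uniformRank e c X + (e (insert i X) - e X + c) / (2 * c) := by
  rw [uniformRank, uniformRank, card_insert_of_notMem hi, Nat.cast_succ]
  field_simp
  ring

theorem spans_uniformRank_of_sub_eq_neg (hc : c ≠ 0) (hi : i ∉ X)
    (h : e (insert i X) - e X = -c) : Spans (uniformRank e c) X i := by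
  rw [Spans, uniformRank_insert hc hi, h, neg_add_cancel, zero_div, add_zero]

theorem uniformRank_insert_eq_add_one (hc : c ≠ 0) (hi : i ∉ X)
    (h : e (insert i X) - e X = c) : uniformRank e c (insert i X) = uniformRank e c X + 1 := by
  rw [uniformRank_insert hc hi, h, ← two_mul, div_self (mul_ne_zero two_ne_zero hc)]

end UniformRank

namespace IsPolyquantoid

variable {N K : Type*} [Fintype N] [DecidableEq N] [Field K] [LinearOrder K]
  [IsStrictOrderedRing K] {e : Finset N → K} {c : K} {n : N}

theorem isSelfdual_uniformRank (he : IsPolyquantoid e) (hsingle : ∀ i, e {i} = c) (hc : c ≠ 0) :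
    IsSelfdual (uniformRank e c) := by
  intro I
  have hcard : (#I : K) + #Iᶜ = #(univ : Finset N) := mod_cast card_add_card_compl I
  rw [sum_uniformRank_singleton hsingle hc]
  simp only [uniformRank]
  rw [← he.map_compl, he.map_univ, ← hcard]
  ring

theorem isPolymatroid_uniformRank (he : IsPolyquantoid e) (hsingle : ∀ i, e {i} = c)
    (hc : 0 < c) : IsPolymatroid (uniformRank e c) where
  map_empty := by simp [uniformRank, he.map_empty]
  mono := by
    refine monotone_iff_forall_le_insert.2 fun X i hi ↦ ?_
    rw [uniformRank_insert hc.ne' hi, ← hsingle i]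
    refine le_add_of_nonneg_right (div_nonneg ?_ (by linarith [he.nonneg {i}]))
    linarith [he.le_insert hi]
  submodular I J := by
    have hcard : (#(I ∪ J) : K) + #(I ∩ J) = #I + #J := mod_cast card_union_add_card_inter I J
    have hdiv : (e (I ∪ J) + e (I ∩ J)) / (2 * c) ≤ (e I + e J) / (2 * c) :=
      div_le_div_of_nonneg_right (he.submodular I J) (by positivity)
    rw [add_div, add_div] at hdiv
    simp only [uniformRank]
    linarith

theorem isMatroidRank_uniformRank (he : IsPolyquantoid e) (hn : IsIdealElement e n)
    (hsingle : ∀ i, e {i} = e {n}) (hpos : 0 < e {n}) :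
    IsMatroidRank (uniformRank e (e {n})) := by
  have hr := he.isPolymatroid_uniformRank hsingle hpos
  have hone i : uniformRank e (e {n}) {i} = 1 := uniformRank_singleton (hsingle i) hpos.ne'
  refine ⟨hr, hr.exists_natCast_eq (n := n) (fun i ↦ (hone i).le) (fun X ↦ ?_) (fun i hi ↦ ?_),
    fun i ↦ Or.inr (hone i)⟩
  · by_cases hX : n ∈ X
    · exact Or.inl (by rw [Spans, insert_eq_of_mem hX])
    · exact (hn.perfect X (subset_compl_singleton.2 hX)).symm.imp
        (spans_uniformRank_of_sub_eq_neg hpos.ne' hX) (uniformRank_insert_eq_add_one hpos.ne' hX)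
  · obtain ⟨A, hnA, _, hauth, hunauth⟩ := hn.essential i (by simpa using hi)
    rw [subset_compl_singleton] at hnA
    rw [sdiff_singleton_eq_erase] at hunauth
    have hstep := uniformRank_insert_eq_add_one hpos.ne' (mt mem_of_mem_erase hnA) hunauth
    exact ⟨A, spans_uniformRank_of_sub_eq_neg hpos.ne' hnA hauth,
      fun hspan ↦ (lt_add_one _).ne (hspan.symm.trans hstep)⟩

end IsPolyquantoid

theorem IsIdealElement.singleton_eq {N K : Type*} [Fintype N] [DecidableEq N] [CommRing K]
    {e : Finset N → K} {n : N} (hn : IsIdealElement e n) (i : N) : e {i} = e {n} := by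
  obtain rfl | hi := eq_or_ne i n
  · rfl
  · exact hn.singleton_eq_of_ne i (by simpa using hi)

theorem ideal_implies_tight_selfdual_matroid_general {N K : Type*} [Fintype N] [DecidableEq N]
    [Field K] [LinearOrder K] [IsStrictOrderedRing K] {e : Finset N → K} {n : N}
    (he : IsPolyquantoid e) (hn : IsIdealElement e n) :
    ∃ (r : Finset N → K) (t : K), 0 < t ∧ IsMatroidRank r ∧ IsTight r ∧ IsSelfdual r ∧
      ∀ I : Finset N, e I = t * (r I - (1 / 2) * ∑ i ∈ I, r {i}) := by
  have hsingle := hn.singleton_eq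
  rcases (he.nonneg {n}).eq_or_lt with hzero | hpos
  · obtain rfl : e = 0 := he.eq_zero_of_singleton_eq_zero fun i ↦ (hsingle i).trans hzero.symm
    have hself : IsSelfdual (0 : Finset N → K) := fun I ↦ by simp
    exact ⟨0, 1, one_pos, isMatroidRank_zero, hself.isTight, hself, fun I ↦ by simp⟩
  · have hself := he.isSelfdual_uniformRank hsingle hpos.ne'
    exact ⟨uniformRank e (e {n}), 2 * e {n}, by positivity,
      he.isMatroidRank_uniformRank hn hsingle hpos, hself.isTight, hself,
      eq_mul_uniformRank_sub_sum hsingle hpos.ne'⟩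

theorem ideal_implies_tight_selfdual_matroid {N : Type*} [Fintype N] [DecidableEq N]
    (e : Finset N → ℝ)
    (hnorm : e ∅ = 0)
    (hcompl : ∀ I : Finset N, e I = e Iᶜ)
    (hsub : ∀ I J : Finset N, e (I ∪ J) + e (I ∩ J) ≤ e I + e J)
    (n : N)
    (hperf : ∀ I ⊆ ({n}ᶜ : Finset N),
      e (insert n I) - e I = e {n} ∨ e (insert n I) - e I = -e {n})
    (hess : ∀ i ∈ ({n}ᶜ : Finset N), ∃ I ⊆ ({n}ᶜ : Finset N), i ∈ I ∧
      e (insert n I) - e I = -e {n} ∧ e (insert n (I \ {i})) - e (I \ {i}) = e {n})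
    (hval : ∀ i ∈ ({n}ᶜ : Finset N), e {i} = e {n}) :
    ∃ (r : Finset N → ℝ) (t : ℝ), 0 < t ∧
      r ∅ = 0 ∧
      (∀ I J : Finset N, I ⊆ J → r I ≤ r J) ∧
      (∀ I J : Finset N, r (I ∪ J) + r (I ∩ J) ≤ r I + r J) ∧
      (∀ I : Finset N, ∃ m : ℕ, r I = m) ∧
      (∀ i : N, r {i} = 0 ∨ r {i} = 1) ∧
      (∀ i : N, r {i}ᶜ = r Finset.univ) ∧
      (∀ I : Finset N, r I = r Iᶜ - r Finset.univ + ∑ i ∈ I, r {i}) ∧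
      (∀ I : Finset N, e I = t * (r I - (1/2) * ∑ i ∈ I, r {i})) := by
  obtain ⟨r, t, ht, hr, htight, hself, hrep⟩ := ideal_implies_tight_selfdual_matroid_general
    ⟨hnorm, hcompl, hsub⟩ ⟨hperf, hess, hval⟩
  exact ⟨r, t, ht, hr.map_empty, fun _ _ h ↦ hr.mono h, hr.submodular, hr.exists_natCast_eq,
    hr.singleton_eq, htight, hself, hrep⟩
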